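/- Let U ∈ ℝ^{k×d} have orthonormal rows, let a ∈ ℝ^d be a unit vector lying in the row span of U, let v ∈ ℝ^d be a unit vector, and let δ ∈ (0,1) be such that |⟨Ua, Uv⟩ − ⟨a, v⟩| ≤ δ and ‖Uv‖₂² ≥ 1 − δ². Let Π := I_d − vvᵀ be the orthogonal projection onto the complement of v. Then ‖UΠa‖₂² ≥ ‖Πa‖₂² − δ² − 2δ. -/

import Mathlib

open MeasureTheory

/-- The Euclidean norm on `ℝ^n`. -/
noncomputable def e2norm {n : ℕ} (v : Fin n → ℝ) : ℝ := Real.sqrt (∑ i, v i ^ 2)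

/-!
Expanding both squares with `c = ⟨v, a⟩`, the quantities `‖a - c • v‖²` and `‖T a - c • T v‖²` are
compared term by term: replacing `⟨a, v⟩` by `⟨T a, T v⟩` costs at most `2 |c| ε`, replacing
`‖v‖²` by `‖T v‖²` costs at most `c² δ²`, and `|c| ≤ 1` by Cauchy–Schwarz. For a matrix with
`U Uᵀ = 1`, the transpose `Uᵀ` is an isometry with left inverse `U`, whence `‖U a‖ = ‖a‖` on the
row span.
-/

open scoped InnerProductSpace Matrix

section InnerProductSpace

variable {𝕜 E F : Type*} [RCLike 𝕜] [NormedAddCommGroup E] [InnerProductSpace 𝕜 E]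
  [NormedAddCommGroup F] [InnerProductSpace 𝕜 F]

theorem norm_sub_smul_sq (a v : E) (c : 𝕜) :
    ‖a - c • v‖ ^ 2 = ‖a‖ ^ 2 - 2 * RCLike.re (c * ⟪a, v⟫_𝕜) + ‖c‖ ^ 2 * ‖v‖ ^ 2 := by
  rw [norm_sub_sq (𝕜 := 𝕜), inner_smul_right, norm_smul, mul_pow]

theorem norm_sub_smul_sq_le_of_norm_inner_sub_le {a v : E} {x y : F} {ε η : ℝ}
    (hax : ‖a‖ ≤ ‖x‖) (hinner : ‖⟪x, y⟫_𝕜 - ⟪a, v⟫_𝕜‖ ≤ ε) (hvy : ‖v‖ ^ 2 - η ≤ ‖y‖ ^ 2) (c : 𝕜) :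
    ‖a - c • v‖ ^ 2 ≤ ‖x - c • y‖ ^ 2 + ‖c‖ ^ 2 * η + 2 * (‖c‖ * ε) := by
  have sq_le : ‖a‖ ^ 2 ≤ ‖x‖ ^ 2 := by gcongr
  have cross_le : RCLike.re (c * ⟪x, y⟫_𝕜) - RCLike.re (c * ⟪a, v⟫_𝕜) ≤ ‖c‖ * ε :=
    calc
      _ = RCLike.re (c * (⟪x, y⟫_𝕜 - ⟪a, v⟫_𝕜)) := by rw [mul_sub, map_sub]
      _ ≤ ‖c * (⟪x, y⟫_𝕜 - ⟪a, v⟫_𝕜)‖ := RCLike.re_le_norm _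
      _ ≤ ‖c‖ * ε := by rw [norm_mul]; gcongr
  have smul_le : ‖c‖ ^ 2 * (‖v‖ ^ 2 - η) ≤ ‖c‖ ^ 2 * ‖y‖ ^ 2 := by gcongr
  rw [norm_sub_smul_sq, norm_sub_smul_sq]
  linarith

theorem stmt10_general (T : E →ₗ[𝕜] F) {a v : E} {δ ε : ℝ} (ha : ‖a‖ ≤ 1) (hv : ‖v‖ ≤ 1)
    (hTa : ‖a‖ ≤ ‖T a‖) (hinner : ‖⟪T a, T v⟫_𝕜 - ⟪a, v⟫_𝕜‖ ≤ ε)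
    (hTv : ‖v‖ ^ 2 - δ ^ 2 ≤ ‖T v‖ ^ 2) :
    ‖a - ⟪v, a⟫_𝕜 • v‖ ^ 2 - δ ^ 2 - 2 * ε ≤ ‖T (a - ⟪v, a⟫_𝕜 • v)‖ ^ 2 := by
  have coeff_le : ‖⟪v, a⟫_𝕜‖ ≤ 1 :=
    (norm_inner_le_norm v a).trans (mul_le_one₀ hv (norm_nonneg a) ha)
  have coeff_sq_mul_le : ‖⟪v, a⟫_𝕜‖ ^ 2 * δ ^ 2 ≤ δ ^ 2 :=
    mul_le_of_le_one_left (sq_nonneg δ) (pow_le_one₀ (norm_nonneg _) coeff_le)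
  have coeff_mul_le : ‖⟪v, a⟫_𝕜‖ * ε ≤ ε :=
    mul_le_of_le_one_left ((norm_nonneg _).trans hinner) coeff_le
  have norm_sq_le := norm_sub_smul_sq_le_of_norm_inner_sub_le hTa hinner hTv ⟪v, a⟫_𝕜
  rw [map_sub, map_smul]
  linarith

end InnerProductSpace

theorem transpose_mulVec_dotProduct_transpose_mulVec {R m n : Type*} [CommSemiring R] [Fintype m]
    [DecidableEq m] [Fintype n] {U : Matrix m n R} (hU : U * Uᵀ = 1) (x y : m → R) :
    (Uᵀ *ᵥ x) ⬝ᵥ (Uᵀ *ᵥ y) = x ⬝ᵥ y := by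
  rw [Matrix.mulVec_transpose U x, ← Matrix.dotProduct_mulVec, Matrix.mulVec_mulVec, hU,
    Matrix.one_mulVec]

theorem e2norm_eq_sqrt_dotProduct {n : ℕ} (v : Fin n → ℝ) : e2norm v = √(v ⬝ᵥ v) := by
  simp only [e2norm, dotProduct, sq]

theorem e2norm_eq_norm_toLp {n : ℕ} (v : Fin n → ℝ) : e2norm v = ‖WithLp.toLp 2 v‖ := by
  simp only [e2norm, EuclideanSpace.norm_eq, Real.norm_eq_abs, sq_abs]

theorem sum_mul_eq_inner_toLp {ι : Type*} [Fintype ι] (x y : ι → ℝ) :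
    ∑ i, x i * y i = ⟪WithLp.toLp 2 x, WithLp.toLp 2 y⟫_ℝ := by
  simp only [PiLp.inner_apply, RCLike.inner_apply, conj_trivial, mul_comm]

theorem e2norm_mulVec_of_mem_range_transpose {k d : ℕ} {U : Matrix (Fin k) (Fin d) ℝ}
    (hU : U * Uᵀ = 1) {a : Fin d → ℝ} (ha : a ∈ Set.range Uᵀ.mulVec) :
    e2norm (U *ᵥ a) = e2norm a := by
  obtain ⟨w, rfl⟩ := ha
  rw [Matrix.mulVec_mulVec, hU, Matrix.one_mulVec, e2norm_eq_sqrt_dotProduct,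
    e2norm_eq_sqrt_dotProduct, transpose_mulVec_dotProduct_transpose_mulVec hU]

/-- If `U` has orthonormal rows, `a` is a unit vector in the row span of `U`, `v` is a
unit vector, `|⟨Ua, Uv⟩ − ⟨a,v⟩| ≤ δ`, and `‖Uv‖² ≥ 1 − δ²`, then with
`Π = I − vvᵀ` we have `‖UΠa‖² ≥ ‖Πa‖² − δ² − 2δ`. -/
theorem stmt10 (k d : ℕ) (U : Matrix (Fin k) (Fin d) ℝ) (hU : U * U.transpose = 1)
    (a v : Fin d → ℝ) (ha : e2norm a = 1) (hv : e2norm v = 1)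
    (haspan : a ∈ Set.range U.transpose.mulVec)
    (δ : ℝ) (hδ0 : 0 < δ) (hδ1 : δ < 1)
    (hinner : |(∑ j, U.mulVec a j * U.mulVec v j) - ∑ i, a i * v i| ≤ δ)
    (hUv : 1 - δ ^ 2 ≤ e2norm (U.mulVec v) ^ 2) :
    e2norm (a - (∑ i, v i * a i) • v) ^ 2 - δ ^ 2 - 2 * δ ≤
      e2norm (U.mulVec (a - (∑ i, v i * a i) • v)) ^ 2 := by
  have hUa : e2norm a ≤ e2norm (U *ᵥ a) := (e2norm_mulVec_of_mem_range_transpose hU haspan).ge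
  rw [← one_pow 2, ← hv] at hUv
  simp only [e2norm_eq_norm_toLp, sum_mul_eq_inner_toLp] at *
  exact stmt10_general (𝕜 := ℝ) U.toEuclideanLin ha.le hv.le hUa hinner hUv
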